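/- Suppose Assumption 1 holds and X and Y are conditionally independent given Z. Then, for any fixed p ≥ 1, J ≥ 1 and fixed locations (t_j)_{j=1}^J in 𝒳̈ × 𝒴, the statistic n^{p/2}·CI_{n,p} converges in distribution, as n → ∞, to the law of ‖G‖_p^p = Σ_{j=1}^J |G_j|^p, where G ~ N(0,Σ) is a centered multivariate Gaussian vector on ℝ^J with covariance Σ = E[u_1 u_1ᵀ]. -/

import Mathlib

open MeasureTheory ProbabilityTheory Filter Topology Asymptotics
open scoped RealInnerProductSpace

noncomputable section

namespace CIPaper

/-- A positive definite kernel. -/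
def PosDefKernel {D : Type*} (k : D → D → ℝ) : Prop :=
  ∀ (n : ℕ) (x : Fin n → D) (c : Fin n → ℝ),
    0 ≤ ∑ i : Fin n, ∑ j : Fin n, c i * c j * k (x i) (x j)

/-- The mean embedding of `ν` with respect to the kernel `k`. -/
def meanEmbed {D : Type*} [MeasurableSpace D] (k : D → D → ℝ) (ν : Measure D) (t : D) : ℝ :=
  ∫ x, k x t ∂ν

/-- A kernel is characteristic if the mean embedding is injective on probability measures. -/
def Characteristic {D : Type*} [MeasurableSpace D] (k : D → D → ℝ) : Prop :=
  ∀ P Q : Measure D, IsProbabilityMeasure P → IsProbabilityMeasure Q →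
    (∀ t, meanEmbed k P t = meanEmbed k Q t) → P = Q

def BoundedKernel {D : Type*} (k : D → D → ℝ) : Prop := ∃ C, ∀ x y, |k x y| ≤ C

/-- Assumption 1 of the paper, for the tensor product kernel built from `kX` and `kY` :
the tensor kernel is positive definite, characteristic, bounded, continuous and analytic. -/
structure Assumption1 {DX DY : Type*} [MeasurableSpace DX] [MeasurableSpace DY]
    [NormedAddCommGroup DX] [NormedSpace ℝ DX] [NormedAddCommGroup DY] [NormedSpace ℝ DY]
    (kX : DX → DX → ℝ) (kY : DY → DY → ℝ) : Prop where
  posdef : PosDefKernel fun p q : DX × DY => kX p.1 q.1 * kY p.2 q.2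
  charac : Characteristic fun p q : DX × DY => kX p.1 q.1 * kY p.2 q.2
  bounded : BoundedKernel fun p q : DX × DY => kX p.1 q.1 * kY p.2 q.2
  continuous : Continuous fun pq : (DX × DY) × (DX × DY) => kX pq.1.1 pq.2.1 * kY pq.1.2 pq.2.2
  analytic : ∀ p : DX × DY, AnalyticOnNhd ℝ (fun q : DX × DY => kX p.1 q.1 * kY p.2 q.2) Set.univ

/-- The random metric `d_{p,J}` between two measures, with locations `t`. -/
def dpJ {D : Type*} [MeasurableSpace D] (k : D → D → ℝ) (p : ℕ) {J : ℕ}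
    (t : Fin J → D) (P Q : Measure D) : ℝ :=
  ((J : ℝ)⁻¹ * ∑ j : Fin J, |meanEmbed k P (t j) - meanEmbed k Q (t j)| ^ p) ^ ((p : ℝ)⁻¹)

/-- `P` is the measure `P_{Ẍ⊗Y|Z}` of the paper : a Borel probability measure with
`P(A×B) = E[E[1_A(Ẍ)|Z]·E[1_B(Y)|Z]]` for all measurable `A`, `B`. -/
def IsCondProdMeasure {Ω : Type*} [MeasurableSpace Ω] (μ : Measure Ω)
    {DX DZ DY : Type*} [MeasurableSpace DX] [MeasurableSpace DZ] [MeasurableSpace DY]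
    (X : Ω → DX) (Z : Ω → DZ) (Y : Ω → DY) (P : Measure ((DX × DZ) × DY)) : Prop :=
  IsProbabilityMeasure P ∧
    ∀ (A : Set (DX × DZ)) (B : Set DY), MeasurableSet A → MeasurableSet B →
      (P (A ×ˢ B)).toReal =
        ∫ ω, ((μ[fun ω' => A.indicator (fun _ => (1 : ℝ)) (X ω', Z ω') |
                MeasurableSpace.comap Z inferInstance]) ω)
            * ((μ[fun ω' => B.indicator (fun _ => (1 : ℝ)) (Y ω') |
                MeasurableSpace.comap Z inferInstance]) ω) ∂μ

/-- The witness function `Δ`. -/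
def witness {Ω : Type*} [MeasurableSpace Ω] (μ : Measure Ω)
    {DX DZ DY : Type*} [MeasurableSpace DZ]
    (kX : DX × DZ → DX × DZ → ℝ) (kY : DY → DY → ℝ)
    (X : Ω → DX) (Z : Ω → DZ) (Y : Ω → DY) (t1 : DX × DZ) (t2 : DY) : ℝ :=
  ∫ ω, (kX t1 (X ω, Z ω) -
          (μ[fun ω' => kX t1 (X ω', Z ω') | MeasurableSpace.comap Z inferInstance]) ω)
      * (kY t2 (Y ω) -
          (μ[fun ω' => kY t2 (Y ω') | MeasurableSpace.comap Z inferInstance]) ω) ∂μ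

/-- Cramér–Wold characterization: `ν` is the centered Gaussian measure on `ℝ^J` with
covariance matrix `S`. -/
def IsCenteredGaussian {J : ℕ} (S : Matrix (Fin J) (Fin J) ℝ) (ν : Measure (Fin J → ℝ)) : Prop :=
  IsProbabilityMeasure ν ∧
    ∀ a : Fin J → ℝ,
      ν.map (fun v => ∑ j, a j * v j) =
        gaussianReal 0 (Real.toNNReal (∑ i, ∑ j, a i * S i j * a j))

/-- Convergence in distribution (weak convergence of the image laws). -/
def TendstoInDistribution {Ω : Type*} [MeasurableSpace Ω] (μ : Measure Ω) {E : Type*}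
    [TopologicalSpace E] [MeasurableSpace E] (W : ℕ → Ω → E) (ν : Measure E) : Prop :=
  ∀ f : BoundedContinuousFunction E ℝ,
    Tendsto (fun n : ℕ => ∫ ω, f (W n ω) ∂μ) atTop (𝓝 (∫ x, f x ∂ν))

/-- The one-sample statistic `u_i(j)` of the paper (oracle version), where `e1`, `e2` are
the conditional mean functions. -/
def uStat {Ω DX DZ DY : Type*} (kX : DX × DZ → DX × DZ → ℝ) (kY : DY → DY → ℝ)
    (e1 : DX × DZ → DZ → ℝ) (e2 : DY → DZ → ℝ)
    (xS : ℕ → Ω → DX) (zS : ℕ → Ω → DZ) (yS : ℕ → Ω → DY)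
    {J : ℕ} (t : Fin J → (DX × DZ) × DY) (i : ℕ) (j : Fin J) (ω : Ω) : ℝ :=
  (kX (t j).1 (xS i ω, zS i ω) - e1 (t j).1 (zS i ω)) *
    (kY (t j).2 (yS i ω) - e2 (t j).2 (zS i ω))

/-- `S_n`, the empirical mean of the `u_i`. -/
def SStat {Ω DX DZ DY : Type*} (kX : DX × DZ → DX × DZ → ℝ) (kY : DY → DY → ℝ)
    (e1 : DX × DZ → DZ → ℝ) (e2 : DY → DZ → ℝ)
    (xS : ℕ → Ω → DX) (zS : ℕ → Ω → DZ) (yS : ℕ → Ω → DY)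
    {J : ℕ} (t : Fin J → (DX × DZ) × DY) (n : ℕ) (ω : Ω) : Fin J → ℝ :=
  fun j => (n : ℝ)⁻¹ * ∑ i ∈ Finset.range n, uStat kX kY e1 e2 xS zS yS t i j ω

/-- The covariance matrix `Σ = E[u₁ u₁ᵀ]`. -/
def covMat {Ω DX DZ DY : Type*} [MeasurableSpace Ω] (μ : Measure Ω)
    (kX : DX × DZ → DX × DZ → ℝ) (kY : DY → DY → ℝ)
    (e1 : DX × DZ → DZ → ℝ) (e2 : DY → DZ → ℝ)
    (xS : ℕ → Ω → DX) (zS : ℕ → Ω → DZ) (yS : ℕ → Ω → DY)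
    {J : ℕ} (t : Fin J → (DX × DZ) × DY) : Matrix (Fin J) (Fin J) ℝ :=
  Matrix.of fun j j' =>
    ∫ ω, uStat kX kY e1 e2 xS zS yS t 0 j ω * uStat kX kY e1 e2 xS zS yS t 0 j' ω ∂μ

/-- The empirical covariance matrix `Σ̂_n` of the oracle `u_i`. -/
def covHat {Ω DX DZ DY : Type*} (kX : DX × DZ → DX × DZ → ℝ) (kY : DY → DY → ℝ)
    (e1 : DX × DZ → DZ → ℝ) (e2 : DY → DZ → ℝ)
    (xS : ℕ → Ω → DX) (zS : ℕ → Ω → DZ) (yS : ℕ → Ω → DY)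
    {J : ℕ} (t : Fin J → (DX × DZ) × DY) (n : ℕ) (ω : Ω) : Matrix (Fin J) (Fin J) ℝ :=
  Matrix.of fun j j' => (n : ℝ)⁻¹ * ∑ i ∈ Finset.range n,
    uStat kX kY e1 e2 xS zS yS t i j ω * uStat kX kY e1 e2 xS zS yS t i j' ω

/-- The regularized least squares estimator built from the first `r` samples `zs` with
targets `target`, kernel `kZ` and regularization parameter `lam`. -/
def rls {DZ : Type*} (kZ : DZ → DZ → ℝ) (zs : ℕ → DZ) (target : ℕ → ℝ)
    (r : ℕ) (lam : ℝ) (z : DZ) : ℝ :=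
  ∑ i : Fin r,
    (((Matrix.of fun i l : Fin r => kZ (zs i) (zs l)) +
        ((r : ℝ) * lam) • (1 : Matrix (Fin r) (Fin r) ℝ))⁻¹.mulVec
      fun i : Fin r => target i) i * kZ (zs i) z

/-- The statistic `ũ_{i,r}(j)` built from the RLS estimators. -/
def uTildeStat {Ω DX DZ DY : Type*} (kX : DX × DZ → DX × DZ → ℝ) (kY : DY → DY → ℝ)
    {J : ℕ} (kZ1 kZ2 : Fin J → DZ → DZ → ℝ)
    (xS : ℕ → Ω → DX) (zS : ℕ → Ω → DZ) (yS : ℕ → Ω → DY)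
    (t : Fin J → (DX × DZ) × DY) (r : ℕ) (lam : ℝ) (i : ℕ) (j : Fin J) (ω : Ω) : ℝ :=
  (kX (t j).1 (xS i ω, zS i ω) -
      rls (kZ1 j) (fun l => zS l ω) (fun l => kX (t j).1 (xS l ω, zS l ω)) r lam (zS i ω)) *
    (kY (t j).2 (yS i ω) -
      rls (kZ2 j) (fun l => zS l ω) (fun l => kY (t j).2 (yS l ω)) r lam (zS i ω))

/-- `S̃_{n,r}`. -/
def STilde {Ω DX DZ DY : Type*} (kX : DX × DZ → DX × DZ → ℝ) (kY : DY → DY → ℝ)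
    {J : ℕ} (kZ1 kZ2 : Fin J → DZ → DZ → ℝ)
    (xS : ℕ → Ω → DX) (zS : ℕ → Ω → DZ) (yS : ℕ → Ω → DY)
    (t : Fin J → (DX × DZ) × DY) (n r : ℕ) (lam : ℝ) (ω : Ω) : Fin J → ℝ :=
  fun j => (n : ℝ)⁻¹ * ∑ i ∈ Finset.range n,
    uTildeStat kX kY kZ1 kZ2 xS zS yS t r lam i j ω

/-- `Σ_{n,r}`, the empirical covariance matrix of the `ũ_{i,r}`. -/
def covTilde {Ω DX DZ DY : Type*} (kX : DX × DZ → DX × DZ → ℝ) (kY : DY → DY → ℝ)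
    {J : ℕ} (kZ1 kZ2 : Fin J → DZ → DZ → ℝ)
    (xS : ℕ → Ω → DX) (zS : ℕ → Ω → DZ) (yS : ℕ → Ω → DY)
    (t : Fin J → (DX × DZ) × DY) (n r : ℕ) (lam : ℝ) (ω : Ω) : Matrix (Fin J) (Fin J) ℝ :=
  Matrix.of fun j j' => (n : ℝ)⁻¹ * ∑ i ∈ Finset.range n,
    uTildeStat kX kY kZ1 kZ2 xS zS yS t r lam i j ω *
      uTildeStat kX kY kZ1 kZ2 xS zS yS t r lam i j' ω

open scoped Classical in
/-- The inverse square root `M^{-1/2}` of a positive semidefinite matrix. -/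
def invSqrtMat {J : ℕ} (M : Matrix (Fin J) (Fin J) ℝ) : Matrix (Fin J) (Fin J) ℝ :=
  if h : M.PosSemidef then
    ((h.1.eigenvectorUnitary : Matrix (Fin J) (Fin J) ℝ) *
      Matrix.diagonal (Real.sqrt ∘ h.1.eigenvalues) *
      (star h.1.eigenvectorUnitary : Matrix (Fin J) (Fin J) ℝ))⁻¹
  else 0

/-- The chi-square distribution with `J` degrees of freedom, realized as the law of the sum of
squares of `J` independent standard Gaussians. -/
def chiSq (J : ℕ) : Measure ℝ :=
  (Measure.pi fun _ : Fin J => gaussianReal 0 1).map fun v => ∑ j, v j ^ 2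

/-- Assumption 2 of the paper for the operator `L` on `L²(P_Z)` :
`Tr((L + λ)⁻¹ L) ≤ Q λ^{-γ}`, the trace of the positive operator being computed in any
Hilbert basis. -/
def TraceAssumption {DZ : Type*} [MeasurableSpace DZ] (PZ : Measure DZ)
    (L : Lp ℝ 2 PZ →L[ℝ] Lp ℝ 2 PZ) (Q γ : ℝ) : Prop :=
  ∀ lam : ℝ, 0 < lam → ∀ (ι : Type) (e : HilbertBasis ι ℝ (Lp ℝ 2 PZ)),
    ∑' i, ⟪(Ring.inverse (L + lam • (1 : Lp ℝ 2 PZ →L[ℝ] Lp ℝ 2 PZ)) * L) (e i), e i⟫ ≤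
      Q * lam ^ (-γ)

/-- `P = L^s` : `P` is self-adjoint and acts as `c ^ s` on every eigenvector of `L`
(this determines the fractional power, via functional calculus, of a positive self-adjoint
compact operator). -/
def IsFracPower {H : Type*} [NormedAddCommGroup H] [InnerProductSpace ℝ H]
    (L : H →L[ℝ] H) (s : ℝ) (P : H →L[ℝ] H) : Prop :=
  (∀ v w : H, ⟪P v, w⟫ = ⟪v, P w⟫) ∧
    ∀ (c : ℝ) (v : H), L v = c • v → P v = c ^ s • v

end CIPaper

open CIPaper

section helpers

theorem mclt {Ω : Type} [MeasurableSpace Ω] (μ : Measure Ω) [IsProbabilityMeasure μ] {J : ℕ}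
    (W : ℕ → Ω → Fin J → ℝ) (hW : ∀ i, Measurable (W i)) (hind : iIndepFun W μ)
    (hid : ∀ i, IdentDistrib (W i) (W 0) μ μ)
    (hL2 : ∀ j, MemLp (fun ω => W 0 ω j) 2 μ) (h0 : ∀ j, ∫ ω, W 0 ω j ∂μ = 0)
    (S : Matrix (Fin J) (Fin J) ℝ) (hS : ∀ i j, S i j = ∫ ω, W 0 ω i * W 0 ω j ∂μ)
    (ν : Measure (Fin J → ℝ)) [IsProbabilityMeasure ν] (hν : IsCenteredGaussian S ν) :
    MeasureTheory.TendstoInDistribution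
      (fun (n : ℕ) ω => (WithLp.toLp 2 (fun j => (√(n:ℝ))⁻¹ * ∑ k ∈ Finset.range n, W k ω j) :
        EuclideanSpace ℝ (Fin J))) atTop
      (fun v : Fin J → ℝ => (WithLp.toLp 2 v : EuclideanSpace ℝ (Fin J))) (fun _ => μ) ν := by
  have hmeas : ∀ n : ℕ, Measurable (fun ω => (WithLp.toLp 2
      (fun j => (√(n:ℝ))⁻¹ * ∑ k ∈ Finset.range n, W k ω j) : EuclideanSpace ℝ (Fin J))) := by
    intro n
    fun_prop
  refine ⟨fun n => (hmeas n).aemeasurable, by fun_prop, ?_⟩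
  refine ProbabilityMeasure.tendsto_iff_tendsto_charFun.2 fun a ↦ ?_
  let V : ℕ → Ω → ℝ := fun k ω => ∑ j, a j * W k ω j
  have hg : Measurable (fun v : Fin J → ℝ => ∑ j, a j * v j) := by fun_prop
  have hVind : iIndepFun V μ := hind.comp (fun _ v => ∑ j, a j * v j) (fun _ => hg)
  have hVid : ∀ i, IdentDistrib (V i) (V 0) μ μ := fun i => (hid i).comp hg
  have hVL2 : MemLp (V 0) 2 μ := memLp_finsetSum _ (fun j _ => (hL2 j).const_mul (a j))
  have hV0 : ∫ ω, V 0 ω ∂μ = 0 := by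
    simp only [V]
    rw [integral_finsetSum _ (fun j _ => ((hL2 j).integrable (by norm_num)).const_mul (a j))]
    simp [integral_const_mul, h0]
  have hvar : Var[V 0; μ] = ∑ i, ∑ j, a i * S i j * a j := by
    rw [variance_of_integral_eq_zero hVL2.aestronglyMeasurable.aemeasurable hV0]
    have : ∀ ω, V 0 ω ^ 2 = ∑ i, ∑ j, a i * a j * (W 0 ω i * W 0 ω j) := by
      intro ω
      simp only [V, sq, Finset.sum_mul_sum]
      refine Finset.sum_congr rfl fun i _ => Finset.sum_congr rfl fun j _ => by ring
    have hi : ∀ i j, Integrable (fun ω => a i * a j * (W 0 ω i * W 0 ω j)) μ := fun i j =>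
      ((hL2 i).integrable_mul (hL2 j)).const_mul _
    simp only [this]
    rw [integral_finsetSum _ (fun i _ => integrable_finsetSum _ (fun j _ => hi i j))]
    refine Finset.sum_congr rfl fun i _ => ?_
    rw [integral_finsetSum _ (fun j _ => hi i j)]
    refine Finset.sum_congr rfl fun j _ => ?_
    rw [integral_const_mul, hS]
    ring
  have hlaw : HasLaw (fun v : Fin J → ℝ => ∑ j, a j * v j)
      (gaussianReal 0 Var[V 0; μ].toNNReal) ν := by
    refine ⟨hg.aemeasurable, ?_⟩
    rw [hvar]
    exact hν.2 a
  have key := tendstoInDistribution_inv_sqrt_mul_sum_sub hlaw hVL2 hVind hVid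
  have key2 := ProbabilityMeasure.tendsto_iff_tendsto_charFun.1 key.tendsto 1
  have hm2 : ∀ n : ℕ, AEMeasurable
      (fun ω => (√(n:ℝ))⁻¹ * (∑ k ∈ Finset.range n, V k ω - n * μ[V 0])) μ :=
    key.forall_aemeasurable
  simp only [ProbabilityMeasure.coe_mk, charFun_apply] at key2 ⊢
  rw [integral_map hg.aemeasurable (by fun_prop)] at key2
  rw [integral_map (by fun_prop) (by fun_prop)]
  convert! key2 using 1
  · funext n
    rw [integral_map (hm2 n) (by fun_prop), integral_map (hmeas n).aemeasurable (by fun_prop)]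
    congr 1
    funext ω
    rw [hV0]
    congr 3
    simp only [V, PiLp.inner_apply, RCLike.inner_apply, conj_trivial, mul_zero, sub_zero, one_mul]
    rw [Finset.sum_comm, Finset.mul_sum]
    refine Finset.sum_congr rfl fun j _ => ?_
    rw [← Finset.mul_sum]; ring
  · simp [PiLp.inner_apply]

/-- Splitting the tensor kernel. -/
theorem kernel_facts {DX DY : Type*} [MeasurableSpace DX] [MeasurableSpace DY]
    [NormedAddCommGroup DX] [NormedSpace ℝ DX] [NormedAddCommGroup DY] [NormedSpace ℝ DY]
    [MeasurableSingletonClass (DX × DY)] [Nontrivial DX]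
    {kX : DX → DX → ℝ} {kY : DY → DY → ℝ} (hk : Assumption1 kX kY) :
    (∃ C, ∀ x y, |kX x y| ≤ C) ∧ (∃ C, ∀ x y, |kY x y| ≤ C) ∧
    (∀ x, Continuous (kX x)) ∧ (∀ x, Continuous (kY x)) := by
  obtain ⟨p, q, hpq⟩ : ∃ p q : DX × DY, kX p.1 q.1 * kY p.2 q.2 ≠ 0 := by
    by_contra! h
    obtain ⟨x, y, hxy⟩ := exists_pair_ne DX
    have := hk.charac (Measure.dirac (x, 0)) (Measure.dirac (y, 0)) inferInstance inferInstance
      (by intro t; simp [meanEmbed, h])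
    have h2 := congrArg (fun m => m {(x, (0 : DY))}) this
    simp [hxy.symm] at h2
  have hx0 := left_ne_zero_of_mul hpq
  have hy0 := right_ne_zero_of_mul hpq
  obtain ⟨C, hC⟩ := hk.bounded
  refine ⟨⟨C / |kY p.2 q.2|, fun x y => ?_⟩, ⟨C / |kX p.1 q.1|, fun x y => ?_⟩, fun x => ?_,
    fun x => ?_⟩
  · rw [le_div_iff₀ (abs_pos.2 hy0), ← abs_mul]
    exact hC (x, p.2) (y, q.2)
  · rw [le_div_iff₀ (abs_pos.2 hx0), ← abs_mul, mul_comm]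
    exact hC (p.1, x) (q.1, y)
  · have h := (hk.continuous.comp (f := fun y => ((x, p.2), (y, q.2))) (by fun_prop)).div_const
      (kY p.2 q.2)
    refine h.congr fun y => ?_
    simp [hy0]
  · have h := (hk.continuous.comp (f := fun y => ((p.1, x), (q.1, y))) (by fun_prop)).div_const
      (kX p.1 q.1)
    refine h.congr fun y => ?_
    simp [hx0]

/-- Mean zero under conditional independence. -/
theorem mean_zero {Ω DX DY DZ : Type} [mΩ : MeasurableSpace Ω] [StandardBorelSpace Ω] [Nonempty Ω]
    [MeasurableSpace DX] [StandardBorelSpace DX] [Nonempty DX]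
    [MeasurableSpace DY] [StandardBorelSpace DY] [Nonempty DY]
    [mz : MeasurableSpace DZ]
    (μ : Measure Ω) [IsProbabilityMeasure μ]
    (X : Ω → DX) (Z : Ω → DZ) (Y : Ω → DY)
    (hX : Measurable X) (hZ : Measurable Z) (hY : Measurable Y)
    (f : DX × DZ → ℝ) (g : DY → ℝ) (hf : Measurable f) (hg : Measurable g)
    (C1 C2 : ℝ) (hfC : ∀ x, |f x| ≤ C1) (hgC : ∀ x, |g x| ≤ C2)
    (e1 e2 : DZ → ℝ) (he1m : Measurable e1) (he2m : Measurable e2)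
    (he1 : (fun ω => e1 (Z ω)) =ᵐ[μ] μ[fun ω' => f (X ω', Z ω') | mz.comap Z])
    (he2 : (fun ω => e2 (Z ω)) =ᵐ[μ] μ[fun ω' => g (Y ω') | mz.comap Z])
    (hH0 : CondIndepFun (mz.comap Z) hZ.comap_le X Y μ) :
    (∀ᵐ ω ∂μ, |(f (X ω, Z ω) - e1 (Z ω)) * (g (Y ω) - e2 (Z ω))| ≤ (C1 + C1) * (C2 + C2)) ∧
    ∫ ω, (f (X ω, Z ω) - e1 (Z ω)) * (g (Y ω) - e2 (Z ω)) ∂μ = 0 := by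
  have hC1 : 0 ≤ C1 := (abs_nonneg _).trans
    (hfC (X (Classical.arbitrary Ω), Z (Classical.arbitrary Ω)))
  have hC2 : 0 ≤ C2 := (abs_nonneg _).trans (hgC (Y (Classical.arbitrary Ω)))
  have hgi : Integrable (fun ω => g (Y ω)) μ :=
    Integrable.of_bound (hg.comp hY).aestronglyMeasurable C2 (ae_of_all _ fun ω => hgC _)
  have b1 : ∀ᵐ ω ∂μ, |e1 (Z ω)| ≤ C1 := by
    have := ae_bdd_abs_condExp_of_ae_bdd_abs (m := mz.comap Z) (μ := μ) (R := C1)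
      (f := fun ω' => f (X ω', Z ω')) (ae_of_all _ fun ω => hfC _)
    filter_upwards [he1, this] with ω h1 h2
    rw [h1]; exact h2
  have b2 : ∀ᵐ ω ∂μ, |e2 (Z ω)| ≤ C2 := by
    have := ae_bdd_abs_condExp_of_ae_bdd_abs (m := mz.comap Z) (μ := μ) (R := C2)
      (f := fun ω' => g (Y ω')) (ae_of_all _ fun ω => hgC _)
    filter_upwards [he2, this] with ω h1 h2
    rw [h1]; exact h2
  have hZX : Measurable (fun ω => (Z ω, X ω)) := by fun_prop
  -- conditional expectation given `(Z, X)`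
  have hcd := (condIndepFun_iff_condDistrib_prod_ae_eq_prodMkRight hY hX hZ).1 hH0
  have hcd' := ae_of_ae_map hZX.aemeasurable hcd
  have c1 := condExp_ae_eq_integral_condDistrib (μ := μ) hZX hY.aemeasurable
    hg.stronglyMeasurable hgi
  have c2 := condExp_ae_eq_integral_condDistrib (μ := μ) hZ hY.aemeasurable
    hg.stronglyMeasurable hgi
  have hce : μ[fun ω => g (Y ω) | MeasurableSpace.comap (fun ω => (Z ω, X ω)) inferInstance]
      =ᵐ[μ] fun ω => e2 (Z ω) := by
    filter_upwards [hcd', c1, c2, he2] with ω h1 h2 h3 h4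
    rw [h2, h4, h3, h1, Kernel.prodMkRight_apply]
  have hA : ∀ᵐ ω ∂μ, |f (X ω, Z ω) - e1 (Z ω)| ≤ C1 + C1 := by
    filter_upwards [b1] with ω h
    exact (abs_sub _ _).trans (add_le_add (hfC _) h)
  have hB : ∀ᵐ ω ∂μ, |g (Y ω) - e2 (Z ω)| ≤ C2 + C2 := by
    filter_upwards [b2] with ω h
    exact (abs_sub _ _).trans (add_le_add (hgC _) h)
  refine ⟨?_, ?_⟩
  · filter_upwards [hA, hB] with ω h1 h2
    rw [abs_mul]
    exact mul_le_mul h1 h2 (abs_nonneg _) (by linarith)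
  set m := MeasurableSpace.comap (fun ω => (Z ω, X ω)) (inferInstance) with hm
  have hAm : StronglyMeasurable[m] (fun ω => f (X ω, Z ω) - e1 (Z ω)) := by
    have : Measurable (fun q : DZ × DX => f (q.2, q.1) - e1 q.1) := by fun_prop
    exact (this.comp (comap_measurable (fun ω => (Z ω, X ω)))).stronglyMeasurable
  have he2i : Integrable (fun ω => e2 (Z ω)) μ :=
    Integrable.of_bound (he2m.comp hZ).aestronglyMeasurable C2 b2
  have he2sm : StronglyMeasurable[m] (fun ω => e2 (Z ω)) := by
    have : Measurable (fun q : DZ × DX => e2 q.1) := by fun_prop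
    exact (this.comp (comap_measurable (fun ω => (Z ω, X ω)))).stronglyMeasurable
  have hmle : m ≤ mΩ := hZX.comap_le
  have hB0 : μ[fun ω => g (Y ω) - e2 (Z ω) | m] =ᵐ[μ] 0 := by
    have h := condExp_sub hgi he2i m
    have h' := condExp_of_stronglyMeasurable hmle he2sm he2i
    filter_upwards [h, hce] with ω h1 h2
    have h1' : (μ[fun ω => g (Y ω) - e2 (Z ω) | m]) ω = _ := h1
    rw [h1', Pi.sub_apply, h', h2]
    simp
  have hpo := condExp_stronglyMeasurable_mul_of_bound hmle hAm (hgi.sub he2i) (C1 + C1) hA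
  rw [← integral_condExp hmle]
  refine integral_eq_zero_of_ae ?_
  filter_upwards [hpo, hB0] with ω h1 h2
  refine h1.trans ?_
  rw [Pi.mul_apply]
  erw [h2]
  simp

end helpers

/-- under `H₀`, `n^{p/2}·CI_{n,p}` converges in law to `‖G‖_p^p`, `G ~ N(0,Σ)`. -/
theorem statement_9
    (dx dy dz : ℕ) (hdx : 1 ≤ dx) (hdy : 1 ≤ dy) (hdz : 1 ≤ dz)
    {Ω : Type} [MeasurableSpace Ω] [StandardBorelSpace Ω] [Nonempty Ω]
    (μ : Measure Ω) [IsProbabilityMeasure μ]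
    (X : Ω → Fin dx → ℝ) (Z : Ω → Fin dz → ℝ) (Y : Ω → Fin dy → ℝ)
    (hX : Measurable X) (hZ : Measurable Z) (hY : Measurable Y)
    (p J : ℕ) (hp : 1 ≤ p) (hJ : 1 ≤ J)
    (kX : ((Fin dx → ℝ) × (Fin dz → ℝ)) → ((Fin dx → ℝ) × (Fin dz → ℝ)) → ℝ) (kY : (Fin dy → ℝ) → (Fin dy → ℝ) → ℝ)
    (hk : Assumption1 kX kY)
    (e1 : ((Fin dx → ℝ) × (Fin dz → ℝ)) → (Fin dz → ℝ) → ℝ) (e2 : (Fin dy → ℝ) → (Fin dz → ℝ) → ℝ)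
    (he1m : ∀ t1, Measurable (e1 t1)) (he2m : ∀ t2, Measurable (e2 t2))
    (he1 : ∀ t1, (fun ω => e1 t1 (Z ω)) =ᵐ[μ]
      μ[fun ω' => kX t1 (X ω', Z ω') | MeasurableSpace.comap Z inferInstance])
    (he2 : ∀ t2, (fun ω => e2 t2 (Z ω)) =ᵐ[μ]
      μ[fun ω' => kY t2 (Y ω') | MeasurableSpace.comap Z inferInstance])
    (xS : ℕ → Ω → Fin dx → ℝ) (zS : ℕ → Ω → Fin dz → ℝ) (yS : ℕ → Ω → Fin dy → ℝ)
    (hxS : ∀ i, Measurable (xS i)) (hzS : ∀ i, Measurable (zS i)) (hyS : ∀ i, Measurable (yS i))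
    (hiid : iIndepFun (m := fun _ => inferInstance) (fun i ω => ((xS i ω, zS i ω), yS i ω)) μ)
    (hlaw : ∀ i, μ.map (fun ω => ((xS i ω, zS i ω), yS i ω)) =
      μ.map fun ω => ((X ω, Z ω), Y ω))
    (t : Fin J → (((Fin dx → ℝ) × (Fin dz → ℝ)) × (Fin dy → ℝ)))
    (hH0 : CondIndepFun (MeasurableSpace.comap Z inferInstance) hZ.comap_le X Y μ)
    (ν : Measure (Fin J → ℝ)) (hν : IsCenteredGaussian (covMat μ kX kY e1 e2 xS zS yS t) ν) :
    ∀ f : BoundedContinuousFunction ℝ ℝ,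
      Tendsto (fun n : ℕ => ∫ ω, f ((n : ℝ) ^ ((p : ℝ) / 2) *
          ∑ j : Fin J, |SStat kX kY e1 e2 xS zS yS t n ω j| ^ p) ∂μ) atTop
        (𝓝 (∫ v, f (∑ j : Fin J, |v j| ^ p) ∂ν)) := by
  intro f
  haveI : IsProbabilityMeasure ν := hν.1
  haveI : Nonempty (Fin dx) := ⟨⟨0, hdx⟩⟩
  obtain ⟨⟨C1, hC1⟩, ⟨C2, hC2⟩, hcX, hcY⟩ := kernel_facts hk
  let U : (((Fin dx → ℝ) × (Fin dz → ℝ)) × (Fin dy → ℝ)) → Fin J → ℝ := fun q j =>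
    (kX (t j).1 q.1 - e1 (t j).1 q.1.2) * (kY (t j).2 q.2 - e2 (t j).2 q.1.2)
  have hU : Measurable U := by
    refine measurable_pi_lambda _ fun j => ?_
    have h1 := (hcX (t j).1).measurable
    have h2 := (hcY (t j).2).measurable
    have h3 := he1m (t j).1
    have h4 := he2m (t j).2
    exact ((h1.comp measurable_fst).sub (h3.comp (measurable_snd.comp measurable_fst))).mul
      ((h2.comp measurable_snd).sub (h4.comp (measurable_snd.comp measurable_fst)))
  have hTm : ∀ i, Measurable (fun ω => ((xS i ω, zS i ω), yS i ω)) := fun i =>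
    ((hxS i).prodMk (hzS i)).prodMk (hyS i)
  have hT : Measurable (fun ω => ((X ω, Z ω), Y ω)) := (hX.prodMk hZ).prodMk hY
  let W : ℕ → Ω → Fin J → ℝ := fun i ω => U ((xS i ω, zS i ω), yS i ω)
  have hWm : ∀ i, Measurable (W i) := fun i => hU.comp (hTm i)
  have hWind : iIndepFun W μ := hiid.comp (fun _ => U) (fun _ => hU)
  have hWid : ∀ i, IdentDistrib (W i) (W 0) μ μ := fun i =>
    (IdentDistrib.mk (hTm i).aemeasurable (hTm 0).aemeasurable
      ((hlaw i).trans (hlaw 0).symm)).comp hU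
  have hW0 : ∀ j, IdentDistrib (fun ω => W 0 ω j) (fun ω => U ((X ω, Z ω), Y ω) j) μ μ := fun j =>
    (IdentDistrib.mk (hTm 0).aemeasurable hT.aemeasurable (hlaw 0)).comp
      ((measurable_pi_apply j).comp hU)
  have hmz := fun j => mean_zero μ X Z Y hX hZ hY (kX (t j).1) (kY (t j).2)
    (hcX _).measurable (hcY _).measurable C1 C2 (hC1 _) (hC2 _) (e1 (t j).1) (e2 (t j).2)
    (he1m _) (he2m _) (he1 _) (he2 _) hH0
  have hL2 : ∀ j, MemLp (fun ω => W 0 ω j) 2 μ := fun j =>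
    (hW0 j).symm.memLp_snd (MemLp.of_bound
      (((measurable_pi_apply j).comp hU).comp hT).aestronglyMeasurable _ (hmz j).1)
  have h0 : ∀ j, ∫ ω, W 0 ω j ∂μ = 0 := fun j => (hW0 j).integral_eq.trans (hmz j).2
  have main := mclt μ W hWm hWind hWid hL2 h0 _ (fun i j => rfl) ν hν
  have hgc : Continuous (fun v : EuclideanSpace ℝ (Fin J) => ∑ j, |v j| ^ p) := by fun_prop
  have h2 := main.continuous_comp hgc
  have h3 := ProbabilityMeasure.tendsto_iff_forall_integral_tendsto.1 h2.tendsto f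
  simp only [ProbabilityMeasure.coe_mk] at h3
  rw [integral_map h2.aemeasurable_limit f.continuous.aestronglyMeasurable] at h3
  refine h3.congr' ?_
  filter_upwards [eventually_gt_atTop 0] with n hn
  rw [integral_map (h2.forall_aemeasurable n) f.continuous.aestronglyMeasurable]
  congr 1
  funext ω
  congr 1
  have hn' : (0 : ℝ) < n := by exact_mod_cast hn
  simp only [Function.comp, SStat]
  rw [Finset.mul_sum]
  refine Finset.sum_congr rfl fun j _ => ?_
  have e : (n : ℝ) ^ ((p : ℝ) / 2) = (√(n : ℝ)) ^ p := by
    rw [Real.sqrt_eq_rpow, ← Real.rpow_natCast, ← Real.rpow_mul hn'.le]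
    congr 1; ring
  have hs : 0 < √(n : ℝ) := Real.sqrt_pos.2 hn'
  rw [e, abs_mul, abs_mul, abs_of_pos (inv_pos.2 hs), abs_of_pos (inv_pos.2 hn'), ← mul_pow,
    ← mul_assoc]
  congr 2
  nth_rewrite 3 [← Real.mul_self_sqrt hn'.le]
  field_simp
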